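/- Let k ≥ 1 and let A be any function from finite multisets of vectors in ℝ^k to ℝ^k (a permutation-invariant aggregation operator, since functions on multisets are automatically independent of input order). Then there exist functions f and g, each mapping finite multisets of vectors in ℝ^k to ℝ^k, such that for every finite multiset S of finite multisets B_1, …, B_m of vectors in ℝ^k, A applied to the disjoint union (multiset join) of the B_i equals g applied to the multiset {f(B_1), …, f(B_m)}. -/

import Mathlib

/-- **Theorem 1 (ABC decomposition).** For `k ≥ 1`, any permutation-invariant
AGGREGATE operator `A` on finite multisets of vectors in `ℝ^k` (modeled as a
function on `Multiset (Fin k → ℝ)`, which is automatically order-independent)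
decomposes into a local aggregation `f` and a global aggregation `g`: applying
`A` to the disjoint union (multiset join) of any finite family of multisets
`B₁, …, Bₘ` equals `g` applied to the multiset `{f(B₁), …, f(Bₘ)}`. -/
theorem abc_aggregate_decomposition (k : ℕ) (hk : 1 ≤ k)
    (A : Multiset (Fin k → ℝ) → (Fin k → ℝ)) :
    ∃ f g : Multiset (Fin k → ℝ) → (Fin k → ℝ),
      ∀ S : Multiset (Multiset (Fin k → ℝ)),
        A S.join = g (S.map f) := by
  haveI : Nonempty (Fin k) := ⟨⟨0, hk⟩⟩
  haveI : Infinite (Fin k → ℝ) := Function.infinite_of_right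
  have h : Cardinal.mk (Multiset (Fin k → ℝ)) ≤ Cardinal.mk (Fin k → ℝ) :=
    (Cardinal.mk_le_of_surjective
      (f := fun l : List (Fin k → ℝ) => (l : Multiset (Fin k → ℝ)))
      Quot.mk_surjective).trans (Cardinal.mk_list_eq_mk _).le
  obtain ⟨f⟩ := h
  have hinv := Function.leftInverse_invFun f.injective
  refine ⟨f, fun T => A (T.map (Function.invFun f)).join, fun S => ?_⟩
  have : (S.map f).map (Function.invFun f) = S := by
    rw [Multiset.map_map, hinv.comp_eq_id, Multiset.map_id]
  simp only [this]
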